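/- If a nonnegative sequence (a_k)_{k=0}^∞ is a TP_∞-preserver, then the sequence (k·a_k)_{k=0}^∞ (the coefficient sequence of z·A′(z), where A(z) = ∑ a_k z^k) is a totally positive sequence. -/

import Mathlib

/-- A real sequence `(a_k)` is totally positive (TP_∞) if all finite minors of the
infinite Toeplitz matrix `(a_{j-i})` (with `a_k = 0` for `k < 0`) are nonnegative. -/
def IsTotallyPositive (a : ℕ → ℝ) : Prop :=
  ∀ (n : ℕ) (i j : Fin n → ℕ), StrictMono i → StrictMono j →
    0 ≤ (Matrix.of fun p q : Fin n => if i p ≤ j q then a (j q - i p) else 0).det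

/-- A real sequence is `m`-times positive (TP_m) if all such minors of order at most `m`
are nonnegative. -/
def IsMultiplyPositive (m : ℕ) (a : ℕ → ℝ) : Prop :=
  ∀ (n : ℕ), n ≤ m → ∀ (i j : Fin n → ℕ), StrictMono i → StrictMono j →
    0 ≤ (Matrix.of fun p q : Fin n => if i p ≤ j q then a (j q - i p) else 0).det

/-- A nonnegative sequence `(a_k)` is a TP_∞-preserver if for every totally positive
sequence `(b_k)`, the sequence `(a_k b_k)` is totally positive. -/
def IsTPPreserver (a : ℕ → ℝ) : Prop :=
  ∀ b : ℕ → ℝ, IsTotallyPositive b → IsTotallyPositive (fun k => a k * b k)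

/-!
The identity sequence `(k)` is totally positive; a preserver therefore sends it to a totally
positive sequence. To see the former, start from `1, 0, 0, …`, whose Toeplitz matrix is the
identity, and take partial sums twice. Total nonnegativity survives partial summation of the
columns of a matrix: for columns `t₀ < t₁ < ⋯`, subtracting from each column its predecessor leaves
the sums over the consecutive disjoint intervals `[0, t₀), [t₀, t₁), …`, and multilinearity expands
the minor into minors of the original matrix whose column indices, one from each interval, are
increasing.
-/

section TotallyNonneg

open Matrix

variable {ι κ R : Type*}

/-- The matrix whose column `k` is the sum of the first `k` columns of `A`; in particular its
column `0` vanishes. -/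
def colPartialSums [AddCommMonoid R] (A : Matrix ι ℕ R) : Matrix ι ℕ R :=
  of fun i k => ∑ m ∈ Finset.range k, A i m

variable [CommRing R]

/-- A matrix over an ordered ring is totally nonnegative if all its finite minors, with rows and
columns taken in increasing order, are nonnegative. -/
def IsTotallyNonneg [Preorder ι] [Preorder κ] [LE R] (A : Matrix ι κ R) : Prop :=
  ∀ (n : ℕ) (i : Fin n → ι) (j : Fin n → κ), StrictMono i → StrictMono j →
    0 ≤ (A.submatrix i j).det

/-- The left endpoints `0, t₀, …, tₙ₋₁` of the consecutive intervals `[0, t₀), …, [tₙ₋₁, tₙ)` into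
which partial sums up to `t` are cut. -/
def leftEndpoints {n : ℕ} (t : Fin (n + 1) → ℕ) : Fin (n + 1) → ℕ :=
  Fin.cons 0 (Fin.init t)

theorem det_of_sum_cols [Fintype ι] [DecidableEq ι] (A : Matrix ι κ R) (s : ι → Finset κ) :
    (of fun i j => ∑ m ∈ s j, A i m).det =
      ∑ r ∈ Fintype.piFinset s, (A.submatrix id r).det := by
  have expand := (detRowAlternating (R := R) (n := ι)).toMultilinearMap.map_sum_finset
    (fun _ m => Aᵀ m) s
  have rows_eq : (of fun i j => ∑ m ∈ s j, A i m)ᵀ = fun j => ∑ m ∈ s j, Aᵀ m := by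
    ext j i
    exact (Finset.sum_apply i (s j) Aᵀ).symm
  rw [← det_transpose, rows_eq]
  exact expand.trans (Finset.sum_congr rfl fun r _ => det_transpose (A.submatrix id r))

theorem det_colPartialSums_submatrix {n : ℕ} (A : Matrix ι ℕ R) (i : Fin (n + 1) → ι)
    {t : Fin (n + 1) → ℕ} (ht : Monotone t) :
    ((colPartialSums A).submatrix i t).det =
      (of fun p q : Fin (n + 1) =>
        ∑ m ∈ Finset.Ico (leftEndpoints t q) (t q), A (i p) m).det := by
  refine det_eq_of_forall_col_eq_smul_add_pred (fun _ => 1) (fun p => ?_) (fun p q => ?_)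
  · simp [colPartialSums, leftEndpoints]
  · have hle : t q.castSucc ≤ t q.succ := ht q.castSucc_le_succ
    simp only [colPartialSums, submatrix_apply, of_apply, leftEndpoints, Fin.cons_succ,
      Fin.init, one_mul]
    rw [add_comm, Finset.sum_range_add_sum_Ico _ hle]

theorem strictMono_of_mem_Ico_leftEndpoints {n : ℕ} {t r : Fin (n + 1) → ℕ}
    (hr : ∀ q, r q ∈ Finset.Ico (leftEndpoints t q) (t q)) : StrictMono r :=
  Fin.strictMono_iff_lt_succ.2 fun q =>
    (Finset.mem_Ico.1 (hr q.castSucc)).2.trans_le (Finset.mem_Ico.1 (hr q.succ)).1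

theorem IsTotallyNonneg.colPartialSums [Preorder ι] [PartialOrder R] [IsOrderedRing R]
    {A : Matrix ι ℕ R} (hA : IsTotallyNonneg A) : IsTotallyNonneg (colPartialSums A) := by
  rintro (_ | n) i t hi ht
  · simp
  · rw [det_colPartialSums_submatrix A i ht.monotone]
    refine (Finset.sum_nonneg fun r hr => ?_).trans_eq
      (det_of_sum_cols (A.submatrix i id) _).symm
    exact hA _ i r hi (strictMono_of_mem_Ico_leftEndpoints (Fintype.mem_piFinset.1 hr))

theorem IsTotallyNonneg.submatrix {ι' κ' : Type*} [Preorder ι] [Preorder κ] [Preorder ι']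
    [Preorder κ'] [LE R] {A : Matrix ι κ R} (hA : IsTotallyNonneg A) {f : ι' → ι} {g : κ' → κ}
    (hf : StrictMono f) (hg : StrictMono g) : IsTotallyNonneg (A.submatrix f g) :=
  fun n i j hi hj => hA n (f ∘ i) (g ∘ j) (hf.comp hi) (hg.comp hj)

theorem isTotallyNonneg_one [Preorder ι] [DecidableEq ι] [Preorder R] [ZeroLEOneClass R] :
    IsTotallyNonneg (1 : Matrix ι ι R) := by
  intro n i j hi hj
  by_cases hij : Set.range i ⊆ Set.range j
  · have hcard : (Set.range j).ncard ≤ (Set.range i).ncard := by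
      simp only [← Set.image_univ, Set.ncard_image_of_injective _ hi.injective,
        Set.ncard_image_of_injective _ hj.injective, le_refl]
    obtain rfl : i = j := (hi.range_inj hj).1 (Set.eq_of_subset_of_ncard_le hij hcard)
    rw [submatrix_one i hi.injective, det_one]
    exact zero_le_one
  · obtain ⟨_, ⟨p, rfl⟩, hp⟩ := Set.not_subset.1 hij
    have hrow : ∀ q, (1 : Matrix ι ι R).submatrix i j p q = 0 := fun q =>
      one_apply_ne fun h : i p = j q => hp ⟨q, h.symm⟩
    exact (det_eq_zero_of_row_eq_zero p hrow).ge

end TotallyNonneg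

section Toeplitz

variable {R : Type*}

/-- The upper triangular infinite Toeplitz matrix `(a_{j-i})` of a sequence, where `a_k = 0` for
`k < 0`. -/
def toeplitz [Zero R] (a : ℕ → R) : Matrix ℕ ℕ R :=
  Matrix.of fun i j => if i ≤ j then a (j - i) else 0

theorem toeplitz_single_zero_one [Zero R] [One R] : toeplitz (Pi.single 0 1 : ℕ → R) = 1 := by
  ext i j
  simp only [toeplitz, Matrix.of_apply, Pi.single_apply, Matrix.one_apply]
  grind

theorem toeplitz_sum_range [AddCommMonoid R] (a : ℕ → R) :
    toeplitz (fun k => ∑ m ∈ Finset.range k, a m) = colPartialSums (toeplitz a) := by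
  ext i j
  simp only [toeplitz, colPartialSums, Matrix.of_apply]
  rw [← Finset.sum_filter]
  have hfilter : (Finset.range j).filter (i ≤ ·) = Finset.Ico i j := by
    ext m
    simp [and_comm]
  rw [hfilter, Finset.sum_Ico_eq_sum_range]
  simp only [Nat.add_sub_cancel_left]
  split_ifs with hij
  · rfl
  · simp [Nat.sub_eq_zero_of_le (le_of_not_ge hij)]

theorem toeplitz_tail [Zero R] {a : ℕ → R} (ha : a 0 = 0) :
    toeplitz (fun k => a (k + 1)) = (toeplitz a).submatrix id Nat.succ := by
  ext i j
  simp only [toeplitz, Matrix.of_apply, Matrix.submatrix_apply, id_eq, Nat.succ_eq_add_one]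
  grind

end Toeplitz

theorem isTotallyPositive_iff_isTotallyNonneg_toeplitz {a : ℕ → ℝ} :
    IsTotallyPositive a ↔ IsTotallyNonneg (toeplitz a) :=
  Iff.rfl

namespace IsTotallyPositive

theorem sum_range {a : ℕ → ℝ} (ha : IsTotallyPositive a) :
    IsTotallyPositive fun k => ∑ m ∈ Finset.range k, a m := by
  rw [isTotallyPositive_iff_isTotallyNonneg_toeplitz] at ha ⊢
  rw [toeplitz_sum_range]
  exact ha.colPartialSums

theorem tail {a : ℕ → ℝ} (ha : IsTotallyPositive a) (ha₀ : a 0 = 0) :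
    IsTotallyPositive fun k => a (k + 1) := by
  rw [isTotallyPositive_iff_isTotallyNonneg_toeplitz] at ha ⊢
  rw [toeplitz_tail ha₀]
  exact ha.submatrix strictMono_id fun _ _ => Nat.succ_lt_succ

theorem single_zero_one : IsTotallyPositive (Pi.single 0 1) := by
  rw [isTotallyPositive_iff_isTotallyNonneg_toeplitz, toeplitz_single_zero_one]
  exact isTotallyNonneg_one

theorem one : IsTotallyPositive 1 := by
  have h := single_zero_one.sum_range.tail (Finset.sum_range_zero _)
  simpa [Pi.one_def, Pi.single_apply] using h

theorem natCast : IsTotallyPositive fun k => (k : ℝ) := by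
  simpa using one.sum_range

end IsTotallyPositive

/-- if `a` is a TP_∞-preserver then `(k * a_k)` is totally positive. -/
theorem stmt_5 (a : ℕ → ℝ) (ha : ∀ k, 0 ≤ a k) (hpres : IsTPPreserver a) :
    IsTotallyPositive (fun k => (k : ℝ) * a k) := by
  simpa only [mul_comm] using hpres _ IsTotallyPositive.natCast
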